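/- arXiv:2305.18941 — 2 statements merged into one kernel-verified Lean document; each statement's English description precedes it below -/
import Mathlib

section
/- Let P > 0, k = sqrt((P+1)² + 1), h = 1 − sqrt((k−1)/(k+1)), and f(x) = (k−1)/(1−x)³ for 0 ≤ x < h, f(x) = 0 for h ≤ x ≤ 1. Let u1(r1,r2) = r2(1−r1) − r1·P + θ(r1,r2)(1−r1)(1−r2) with θ(r1,r2) = 1 if r1 > r2, 1/2 if r1 = r2, 0 otherwise, and u2(r1,r2) = u1(r2,r1). If (μ1, μ2) is any mixed Nash equilibrium of this game — i.e., probability measures on [0,1] such that no player can strictly increase their expected payoff by unilaterally replacing their measure by any other probability measure — then μ1 = μ2 and both equal the measure with density f with respect to Lebesgue measure on [0,1]. In particular the Nash equilibrium is unique and symmetric. -/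
open MeasureTheory

/-- Tie-breaking function: 1 if `r1 > r2`, 1/2 if `r1 = r2`, 0 if `r1 < r2`. -/
noncomputable def theta (r1 r2 : ℝ) : ℝ :=
  if r1 > r2 then 1 else if r1 = r2 then 1 / 2 else 0

/-- Expected utility of Player 1 in the two-player CfR game with penalty `P`
and reward `R = 1`. -/
noncomputable def u1 (P r1 r2 : ℝ) : ℝ :=
  r2 * (1 - r1) - r1 * P + theta r1 r2 * ((1 - r1) * (1 - r2))

/-- Expected utility of Player 2 (by symmetry). -/
noncomputable def u2 (P r1 r2 : ℝ) : ℝ := u1 P r2 r1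

/-! Playing `x` against a strategy `ν` pays `(1 - x) * (m + P + H x) - P`, where `m` is the mean of
`ν` and `H` is the distribution function of `(1 - y) dν(y)` with atoms counted half. If the
equilibrium payoff is `V`, best responding therefore means that `H` stays below the barrier
`(V + P) / (1 - x) - (m + P)` and that the player's own strategy lives where the two meet. Since the
barrier increases strictly, neither strategy can leave a gap below a point where it meets its
barrier unless both have an atom at the upper end of the gap; but a common atom is impossible, as
halving it makes `H` miss the barrier. So both distribution functions follow their barriers on a
common interval `[0, T]`. The total mass forces `V + P = (1 + P) * (1 - T)` for both players, which
leaves the density `(V + P) / (1 - x) ^ 3` and possibly an atom at `0`. The atoms are equal since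
both strategies have mass one, hence vanish since they are not both positive, and normalization
determines `T`. -/

open Set Filter Topology

section MidCDF

variable {μ : Measure ℝ} [IsFiniteMeasure μ]

/-- The distribution function of `μ` with every atom counted half at its location. This is how the
tie-breaking rule `theta` sees the opponent's strategy. -/
noncomputable def midCDF (μ : Measure ℝ) (x : ℝ) : ℝ :=
  (μ.real (Iio x) + μ.real (Iic x)) / 2

theorem midCDF_le_real_Iic (x : ℝ) : midCDF μ x ≤ μ.real (Iic x) := by
  have h : μ.real (Iio x) ≤ μ.real (Iic x) := measureReal_mono Iio_subset_Iic_self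
  unfold midCDF
  linarith

theorem real_Iic_le_midCDF_of_lt {x y : ℝ} (hxy : x < y) : μ.real (Iic x) ≤ midCDF μ y := by
  have hIio : μ.real (Iic x) ≤ μ.real (Iio y) := measureReal_mono (Iic_subset_Iio.2 hxy)
  have hIic : μ.real (Iic x) ≤ μ.real (Iic y) := measureReal_mono (Iic_subset_Iic.2 hxy.le)
  unfold midCDF
  linarith

theorem measure_singleton_eq_zero_of_real_Iic_le_midCDF {x : ℝ}
    (h : μ.real (Iic x) ≤ midCDF μ x) : μ {x} = 0 := by
  have hsplit : μ.real (Iic x) = μ.real (Iio x) + μ.real {x} := by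
    rw [← Iio_union_right, measureReal_union (by simp) (measurableSet_singleton x)]
  rw [← measureReal_eq_zero_iff]
  refine le_antisymm ?_ measureReal_nonneg
  unfold midCDF at h
  linarith

theorem tendsto_real_Iic_nhdsGE (μ : Measure ℝ) [IsFiniteMeasure μ] (x : ℝ) :
    Tendsto (fun y ↦ μ.real (Iic y)) (𝓝[≥] x) (𝓝 (μ.real (Iic x))) := by
  refine continuousWithinAt_Ioi_iff_Ici.1 ?_
  have hinter : ⋂ y > x, Iic y = Iic x := by
    ext z
    simp only [mem_iInter, mem_Iic]
    exact ⟨le_of_forall_gt_imp_ge_of_dense, fun hz y hy ↦ hz.trans hy.le⟩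
  have h := tendsto_measure_biInter_gt (μ := μ) (s := Iic) (a := x)
    (fun _ _ ↦ measurableSet_Iic.nullMeasurableSet) (fun _ _ _ hij ↦ Iic_subset_Iic.2 hij)
    ⟨x + 1, by simp, measure_ne_top _ _⟩
  rw [hinter] at h
  exact (ENNReal.tendsto_toReal (measure_ne_top _ _)).comp h

theorem real_Iic_add_real_Ioc {x y : ℝ} (hxy : x ≤ y) :
    μ.real (Iic x) + μ.real (Ioc x y) = μ.real (Iic y) := by
  rw [← Iic_union_Ioc_eq_Iic hxy,
    measureReal_union (Iic_disjoint_Ioc le_rfl) measurableSet_Ioc]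

end MidCDF

/-- Complementary slackness on `[a, b)`: the barrier `g` increases continuously to `∞` and bounds
the midpoint distribution function of `ν`, and `μ` lives where the bound is attained. In the game,
`μ` and `ν` are the weighted strategies of a player and of the opponent, and the bound is attained
at the best responses of the former to the latter. -/
structure ComplementarySlackness (g : ℝ → ℝ) (a b : ℝ) (μ ν : Measure ℝ) : Prop where
  continuousOn : ContinuousOn g (Ico a b)
  strictMonoOn : StrictMonoOn g (Ico a b)
  tendsto_atTop : Tendsto g (𝓝[<] b) atTop
  midCDF_le : ∀ x ∈ Ico a b, midCDF ν x ≤ g x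
  ae_eq : ∀ᵐ x ∂μ, x ∈ Ico a b ∧ midCDF ν x = g x

/-- The points of `[a, b)` at which the (right-continuous) distribution function of `ν` meets the
barrier `g`. -/
def contactSet (g : ℝ → ℝ) (a b : ℝ) (ν : Measure ℝ) : Set ℝ :=
  {x ∈ Ico a b | ν.real (Iic x) = g x}

namespace ComplementarySlackness

section Single

variable {g : ℝ → ℝ} {a b x y : ℝ} {μ ν : Measure ℝ}

theorem tendsto_nhdsGE (h : ComplementarySlackness g a b μ ν) (hx : x ∈ Ico a b) :
    Tendsto g (𝓝[≥] x) (𝓝 (g x)) :=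
  (h.continuousOn x hx).mono_of_mem_nhdsWithin (Ico_mem_nhdsGE_of_mem hx)

variable [IsFiniteMeasure ν]

theorem real_Iic_le (h : ComplementarySlackness g a b μ ν) (hx : x ∈ Ico a b) :
    ν.real (Iic x) ≤ g x := by
  refine ge_of_tendsto ((h.tendsto_nhdsGE hx).mono_left (nhdsWithin_mono x Ioi_subset_Ici_self)) ?_
  filter_upwards [Ioo_mem_nhdsGT hx.2] with y hy
  exact (real_Iic_le_midCDF_of_lt hy.1).trans (h.midCDF_le y ⟨hx.1.trans hy.1.le, hy.2⟩)

theorem ae_mem_contactSet (h : ComplementarySlackness g a b μ ν) :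
    ∀ᵐ x ∂μ, x ∈ contactSet g a b ν := by
  filter_upwards [h.ae_eq] with x ⟨hx, hgx⟩
  exact ⟨hx, (h.real_Iic_le hx).antisymm (hgx ▸ midCDF_le_real_Iic x)⟩

theorem measure_eq_zero_of_disjoint (h : ComplementarySlackness g a b μ ν) {s : Set ℝ}
    (hs : Disjoint s (contactSet g a b ν)) : μ s = 0 :=
  measure_mono_null (fun _ hx ↦ disjoint_left.1 hs hx) h.ae_mem_contactSet

theorem mem_contactSet_of_measure_singleton_ne_zero (h : ComplementarySlackness g a b μ ν)
    (hx : μ {x} ≠ 0) : x ∈ contactSet g a b ν := by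
  by_contra hxC
  exact hx (h.measure_eq_zero_of_disjoint (disjoint_singleton_left.2 hxC))

theorem measure_singleton_eq_zero_or (h : ComplementarySlackness g a b μ ν) (x : ℝ) :
    μ {x} = 0 ∨ ν {x} = 0 := by
  by_cases hx : x ∈ Ico a b ∧ midCDF ν x = g x
  · exact .inr <| measure_singleton_eq_zero_of_real_Iic_le_midCDF <|
      (h.real_Iic_le hx.1).trans_eq hx.2.symm
  · exact .inl <| measure_mono_null (singleton_subset_iff.2 hx) h.ae_eq

theorem eventually_notMem_contactSet (h : ComplementarySlackness g a b μ ν) (hx : x ∈ Ico a b)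
    (hxC : x ∉ contactSet g a b ν) : ∀ᶠ y in 𝓝[≥] x, y ∉ contactSet g a b ν := by
  have hlt : ν.real (Iic x) < g x := (h.real_Iic_le hx).lt_of_ne fun heq ↦ hxC ⟨hx, heq⟩
  filter_upwards [(tendsto_real_Iic_nhdsGE ν x).eventually_lt (h.tendsto_nhdsGE hx) hlt]
    with y hy hyC
  exact hy.ne hyC.2

theorem measure_Ioc_ne_zero (h : ComplementarySlackness g a b μ ν) (hx : x ∈ Ico a b)
    (hxy : x < y) (hy : y ∈ contactSet g a b ν) : ν (Ioc x y) ≠ 0 := by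
  intro h0
  have hconst : ν.real (Iic x) = ν.real (Iic y) := by
    simpa [measureReal_def, h0] using real_Iic_add_real_Ioc (μ := ν) hxy.le
  have hlt : g x < ν.real (Iic y) := hy.2 ▸ h.strictMonoOn hx hy.1 hxy
  exact (hconst ▸ hlt).not_ge (h.real_Iic_le hx)

theorem measure_singleton_ne_zero (h : ComplementarySlackness g a b μ ν) (hx : x ∈ Ico a b)
    (hxy : x < y) (hy : y ∈ contactSet g a b ν) (h0 : ν (Ioo x y) = 0) : ν {y} ≠ 0 := fun hy0 ↦
  h.measure_Ioc_ne_zero hx hxy hy (Ioo_union_right hxy ▸ measure_union_null h0 hy0)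

theorem mem_contactSet_of_forall_lt (h : ComplementarySlackness g a b μ ν) (hx : x ∈ Ioo a b)
    (hlt : ∀ y ∈ Ico a x, y ∈ contactSet g a b ν) : x ∈ contactSet g a b ν := by
  have hxI : x ∈ Ico a b := Ioo_subset_Ico_self hx
  have hgx : Tendsto g (𝓝[<] x) (𝓝 (g x)) :=
    (h.continuousOn.continuousAt (Ico_mem_nhds hx.1 hx.2)).mono_left nhdsWithin_le_nhds
  refine ⟨hxI, (h.real_Iic_le hxI).antisymm (le_of_tendsto hgx ?_)⟩
  filter_upwards [Ioo_mem_nhdsLT hx.1] with y hy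
  rw [← (hlt y ⟨hy.1.le, hy.2⟩).2]
  exact measureReal_mono (Iic_subset_Iic.2 hy.2.le)

theorem exists_lt_forall_mem_contactSet_le (h : ComplementarySlackness g a b μ ν) :
    ∃ M < b, ∀ x ∈ contactSet g a b ν, x ≤ M := by
  obtain ⟨M, hM, hMg⟩ :=
    mem_nhdsLT_iff_exists_Ioo_subset.1 (h.tendsto_atTop.eventually_gt_atTop (ν.real univ))
  refine ⟨M, hM, fun x hx ↦ ?_⟩
  by_contra! hMx
  have hlt : ν.real univ < g x := hMg ⟨hMx, hx.1.2⟩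
  exact hlt.not_ge (hx.2 ▸ measureReal_mono (subset_univ _))

end Single

section Mutual

variable {g₁ g₂ : ℝ → ℝ} {a b x y : ℝ} {μ ν : Measure ℝ} [IsFiniteMeasure μ] [IsFiniteMeasure ν]

-- Across a gap in the contact sets neither measure charges the open interval, so the measure
-- meeting its barrier at `y` must jump there; this makes `y` a contact point, hence an atom, of the
-- other one too, whereas two measures in mutual slackness share no atom.
theorem not_disjoint_Ioo_contactSet_union (h₁ : ComplementarySlackness g₁ a b μ ν)
    (h₂ : ComplementarySlackness g₂ a b ν μ) (hx : x ∈ Ico a b) (hxy : x < y)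
    (hy : y ∈ contactSet g₁ a b ν ∪ contactSet g₂ a b μ) :
    ¬ Disjoint (Ioo x y) (contactSet g₁ a b ν ∪ contactSet g₂ a b μ) := by
  intro hdisj
  rw [disjoint_union_right] at hdisj
  have hν : y ∈ contactSet g₁ a b ν → ν {y} ≠ 0 := fun hyC ↦
    h₁.measure_singleton_ne_zero hx hxy hyC (h₂.measure_eq_zero_of_disjoint hdisj.2)
  have hμ : y ∈ contactSet g₂ a b μ → μ {y} ≠ 0 := fun hyC ↦
    h₂.measure_singleton_ne_zero hx hxy hyC (h₁.measure_eq_zero_of_disjoint hdisj.1)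
  have hiff : μ {y} ≠ 0 ↔ ν {y} ≠ 0 :=
    ⟨fun h ↦ hν (h₁.mem_contactSet_of_measure_singleton_ne_zero h),
      fun h ↦ hμ (h₂.mem_contactSet_of_measure_singleton_ne_zero h)⟩
  have hatoms : μ {y} ≠ 0 ∧ ν {y} ≠ 0 :=
    hy.elim (fun h ↦ ⟨hiff.2 (hν h), hν h⟩) fun h ↦ ⟨hμ h, hiff.1 (hμ h)⟩
  exact (h₁.measure_singleton_eq_zero_or y).elim hatoms.1 hatoms.2

theorem eventually_notMem_contactSet_union (h₁ : ComplementarySlackness g₁ a b μ ν)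
    (h₂ : ComplementarySlackness g₂ a b ν μ) (hx : x ∈ Ico a b)
    (hxC : x ∉ contactSet g₁ a b ν) :
    ∀ᶠ y in 𝓝[>] x, y ∉ contactSet g₁ a b ν ∪ contactSet g₂ a b μ := by
  obtain ⟨y, hxy, hy⟩ :=
    mem_nhdsGE_iff_exists_Icc_subset.1 (h₁.eventually_notMem_contactSet hx hxC)
  have hμ : μ (Icc x y) = 0 := h₁.measure_eq_zero_of_disjoint (disjoint_left.2 fun _ hz ↦ hy hz)
  filter_upwards [Ioc_mem_nhdsGT hxy] with z hz hzC
  refine hzC.elim (hy (Ioc_subset_Icc_self hz)) fun hzC₂ ↦ ?_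
  exact h₂.measure_Ioc_ne_zero hx hz.1 hzC₂
    (measure_mono_null (Ioc_subset_Icc_self.trans (Icc_subset_Icc_right hz.2)) hμ)

theorem mem_contactSet_of_lt (h₁ : ComplementarySlackness g₁ a b μ ν)
    (h₂ : ComplementarySlackness g₂ a b ν μ) (hax : a ≤ x) (hxy : x < y)
    (hy : y ∈ contactSet g₁ a b ν ∪ contactSet g₂ a b μ) : x ∈ contactSet g₁ a b ν := by
  have hyb : y < b := hy.elim (fun h ↦ h.1.2) fun h ↦ h.1.2
  have hx : x ∈ Ico a b := ⟨hax, hxy.trans hyb⟩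
  by_contra hxC
  set A := (contactSet g₁ a b ν ∪ contactSet g₂ a b μ) ∩ Ioi x
  have hne : A.Nonempty := ⟨y, hy, hxy⟩
  have hglb : IsGLB A (sInf A) := isGLB_csInf hne ⟨x, fun _ hz ↦ hz.2.le⟩
  have hxz : x ≤ sInf A := hglb.2 fun _ hz ↦ hz.2.le
  have hmem : sInf A ∈ A := by
    by_contra hnot
    refine hglb.frequently_mem hne ?_
    rcases hxz.eq_or_lt with heq | hlt
    · rw [← heq, ← Ioi_insert, nhdsWithin_insert, eventually_sup]
      exact ⟨fun h ↦ lt_irrefl x h.2,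
        (h₁.eventually_notMem_contactSet_union h₂ hx hxC).mono fun _ hz hzA ↦ hz hzA.1⟩
    · have hI : sInf A ∈ Ico a b := ⟨hax.trans hxz, (hglb.1 ⟨hy, hxy⟩).trans_lt hyb⟩
      have hC : sInf A ∉ contactSet g₁ a b ν ∪ contactSet g₂ a b μ := fun h ↦ hnot ⟨h, hlt⟩
      rw [mem_union, not_or] at hC
      filter_upwards [h₁.eventually_notMem_contactSet hI hC.1,
        h₂.eventually_notMem_contactSet hI hC.2] with z hz₁ hz₂ hzA
      exact hzA.1.elim hz₁ hz₂
  exact h₁.not_disjoint_Ioo_contactSet_union h₂ hx hmem.2 hmem.1 <|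
    disjoint_left.2 fun z hz hzC ↦ hz.2.not_ge (hglb.1 ⟨hzC, hz.1⟩)

theorem exists_isLUB_contactSet_union [NeZero μ] [NeZero ν]
    (h₁ : ComplementarySlackness g₁ a b μ ν) (h₂ : ComplementarySlackness g₂ a b ν μ) :
    ∃ T ∈ Ioo a b, IsLUB (contactSet g₁ a b ν ∪ contactSet g₂ a b μ) T := by
  obtain ⟨M₁, hM₁, hle₁⟩ := h₁.exists_lt_forall_mem_contactSet_le
  obtain ⟨M₂, hM₂, hle₂⟩ := h₂.exists_lt_forall_mem_contactSet_le
  obtain ⟨s, hs⟩ := h₁.ae_mem_contactSet.exists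
  have hbound : max M₁ M₂ ∈ upperBounds (contactSet g₁ a b ν ∪ contactSet g₂ a b μ) := fun x hx ↦
    hx.elim (fun h ↦ le_max_of_le_left (hle₁ x h)) fun h ↦ le_max_of_le_right (hle₂ x h)
  obtain ⟨T, hT⟩ : ∃ T, IsLUB (contactSet g₁ a b ν ∪ contactSet g₂ a b μ) T :=
    ⟨_, isLUB_csSup ⟨s, .inl hs⟩ ⟨_, hbound⟩⟩
  refine ⟨T, ⟨?_, (hT.2 hbound).trans_lt (max_lt hM₁ hM₂)⟩, hT⟩
  by_contra! hTa
  have hμ : ∀ᵐ x ∂μ, x = a := h₁.ae_mem_contactSet.mono fun x hx ↦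
    ((hT.1 (.inl hx)).trans hTa).antisymm hx.1.1
  have hν : ∀ᵐ x ∂ν, x = a := h₂.ae_mem_contactSet.mono fun x hx ↦
    ((hT.1 (.inr hx)).trans hTa).antisymm hx.1.1
  rcases h₁.measure_singleton_eq_zero_or a with h0 | h0
  · obtain ⟨x, hx, hxa⟩ := (hμ.and (measure_eq_zero_iff_ae_notMem.1 h0)).exists
    exact hxa hx
  · obtain ⟨x, hx, hxa⟩ := (hν.and (measure_eq_zero_iff_ae_notMem.1 h0)).exists
    exact hxa hx

theorem mem_contactSet_of_isLUB (h₁ : ComplementarySlackness g₁ a b μ ν)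
    (h₂ : ComplementarySlackness g₂ a b ν μ) {T : ℝ} (hT : T ∈ Ioo a b)
    (hlub : IsLUB (contactSet g₁ a b ν ∪ contactSet g₂ a b μ) T) (hx : x ∈ Icc a T) :
    x ∈ contactSet g₁ a b ν := by
  have hlt : ∀ y ∈ Ico a T, y ∈ contactSet g₁ a b ν := fun y hy ↦ by
    obtain ⟨z, hz, hyz, -⟩ := hlub.exists_between hy.2
    exact h₁.mem_contactSet_of_lt h₂ hy.1 hyz hz
  rcases hx.2.eq_or_lt with rfl | hxT
  · exact h₁.mem_contactSet_of_forall_lt hT hlt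
  · exact hlt x ⟨hx.1, hxT⟩

theorem exists_forall_real_Iic_eq [NeZero μ] [NeZero ν]
    (h₁ : ComplementarySlackness g₁ a b μ ν) (h₂ : ComplementarySlackness g₂ a b ν μ) :
    ∃ T ∈ Ioo a b, (∀ᵐ x ∂μ, x ∈ Icc a T) ∧ (∀ᵐ x ∂ν, x ∈ Icc a T) ∧
      (∀ x ∈ Icc a T, ν.real (Iic x) = g₁ x) ∧ ∀ x ∈ Icc a T, μ.real (Iic x) = g₂ x := by
  obtain ⟨T, hT, hlub⟩ := h₁.exists_isLUB_contactSet_union h₂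
  exact ⟨T, hT, h₁.ae_mem_contactSet.mono fun x hx ↦ ⟨hx.1.1, hlub.1 (.inl hx)⟩,
    h₂.ae_mem_contactSet.mono fun x hx ↦ ⟨hx.1.1, hlub.1 (.inr hx)⟩,
    fun x hx ↦ (h₁.mem_contactSet_of_isLUB h₂ hT hlub hx).2,
    fun x hx ↦ (h₂.mem_contactSet_of_isLUB h₁ hT (union_comm _ _ ▸ hlub) hx).2⟩

end Mutual

end ComplementarySlackness

section Density

theorem setLIntegral_Ioc_ofReal_of_hasDerivAt {F F' : ℝ → ℝ} {a b : ℝ} (hab : a ≤ b)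
    (hF : ∀ x ∈ Icc a b, HasDerivAt F (F' x) x) (hF' : ∀ x ∈ Icc a b, 0 ≤ F' x) :
    ∫⁻ x in Ioc a b, ENNReal.ofReal (F' x) = ENNReal.ofReal (F b - F a) := by
  have hint : IntegrableOn F' (Ioc a b) :=
    intervalIntegral.integrableOn_deriv_of_nonneg
      (fun x hx ↦ (hF x hx).continuousAt.continuousWithinAt)
      (fun x hx ↦ hF x (Ioo_subset_Icc_self hx)) fun x hx ↦ hF' x (Ioo_subset_Icc_self hx)
  have hnonneg : ∀ᵐ x ∂volume.restrict (Ioc a b), 0 ≤ F' x :=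
    (ae_restrict_mem measurableSet_Ioc).mono fun x hx ↦ hF' x (Ioc_subset_Icc_self hx)
  rw [← ofReal_integral_eq_lintegral_ofReal hint hnonneg,
    ← intervalIntegral.integral_of_le hab, intervalIntegral.integral_eq_sub_of_hasDerivAt
      (by rwa [uIcc_of_le hab]) ((intervalIntegrable_iff_integrableOn_Ioc_of_le hab).2 hint)]

theorem eq_smul_dirac_add_withDensity_of_real_Iic_eq {μ : Measure ℝ} [IsFiniteMeasure μ]
    {F F' : ℝ → ℝ} {a b : ℝ} (hab : a ≤ b) (hF : ∀ x ∈ Icc a b, HasDerivAt F (F' x) x)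
    (hF' : ∀ x ∈ Icc a b, 0 ≤ F' x) (hμ : ∀ᵐ x ∂μ, x ∈ Icc a b)
    (hμF : ∀ x ∈ Icc a b, μ.real (Iic x) = F x) :
    μ = ENNReal.ofReal (F a) • Measure.dirac a +
      (volume.restrict (Ioc a b)).withDensity fun x ↦ ENNReal.ofReal (F' x) := by
  refine Measure.ext_of_Iic _ _ fun x ↦ ?_
  rw [Measure.add_apply, Measure.smul_apply, smul_eq_mul,
    Measure.dirac_apply' _ measurableSet_Iic, withDensity_apply _ measurableSet_Iic,
    Measure.restrict_restrict measurableSet_Iic, inter_comm, Ioc_inter_Iic]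
  rcases lt_or_ge x a with hx | hx
  · have hμx : μ (Iic x) = 0 :=
      measure_mono_null (fun y (hy : y ≤ x) (hyI : y ∈ Icc a b) ↦ (hy.trans_lt hx).not_ge hyI.1) hμ
    simp [hμx, hx.not_ge, hx.le]
  · have hz : min b x ∈ Icc a b := ⟨le_min hab hx, min_le_left b x⟩
    have hμx : μ (Iic x) = ENNReal.ofReal (F (min b x)) := by
      rw [← hμF _ hz, ofReal_measureReal]
      refine measure_congr (hμ.mono fun y hy ↦ propext ?_)
      exact (le_min_iff.trans (and_iff_right hy.2)).symm
    have hFa : 0 ≤ F a := hμF a (left_mem_Icc.2 hab) ▸ measureReal_nonneg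
    have hmono : F a ≤ F (min b x) := by
      rw [← hμF _ hz, ← hμF _ (left_mem_Icc.2 hab)]
      exact measureReal_mono (Iic_subset_Iic.2 hz.1)
    have hsub : Icc a (min b x) ⊆ Icc a b := Icc_subset_Icc_right hz.2
    rw [setLIntegral_Ioc_ofReal_of_hasDerivAt hz.1 (fun y hy ↦ hF y (hsub hy))
      (fun y hy ↦ hF' y (hsub hy)), hμx, indicator_of_mem (mem_Iic.2 hx), Pi.one_apply, mul_one,
      ← ENNReal.ofReal_add hFa (sub_nonneg.2 hmono), add_sub_cancel]

theorem eq_and_eq_of_eq_smul_dirac_add {α : Type*} [MeasurableSpace α]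
    [MeasurableSingletonClass α] {μ ν ρ : Measure α} [IsProbabilityMeasure μ]
    [IsProbabilityMeasure ν] {x : α} {s t : ENNReal} (hμ : μ = s • Measure.dirac x + ρ)
    (hν : ν = t • Measure.dirac x + ρ) (h0 : μ {x} = 0 ∨ ν {x} = 0) : μ = ρ ∧ ν = ρ := by
  have hs : s + ρ univ = 1 := by rw [← measure_univ (μ := μ), hμ]; simp
  have ht : t + ρ univ = 1 := by rw [← measure_univ (μ := ν), hν]; simp
  have hρ : ρ univ ≠ ⊤ := ne_top_of_le_ne_top ENNReal.one_ne_top (hs ▸ le_add_self)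
  have hst : s = t := (ENNReal.add_left_inj hρ).1 (hs.trans ht.symm)
  have hs0 : s = 0 := by
    rw [hμ, hν, ← hst, or_self] at h0
    exact nonpos_iff_eq_zero.1 (by simpa using (le_self_add.trans_eq h0 : _ ≤ (0 : ENNReal)))
  exact ⟨by simpa [hs0] using hμ, by simpa [← hst, hs0] using hν⟩

theorem withDensity_restrict_Icc_ite_lt {φ : ℝ → ℝ} {a b c : ℝ} (hbc : b ≤ c) :
    (volume.restrict (Icc a c)).withDensity
        (fun x ↦ ENNReal.ofReal (if x < b then φ x else 0)) =
      (volume.restrict (Ioc a b)).withDensity fun x ↦ ENNReal.ofReal (φ x) := by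
  have hind : (fun x ↦ ENNReal.ofReal (if x < b then φ x else 0)) =
      (Iio b).indicator fun x ↦ ENNReal.ofReal (φ x) := by
    ext x
    by_cases hx : x < b <;> simp [hx]
  have hset : Iio b ∩ Icc a c = Ico a b := by
    ext x
    exact ⟨fun hx ↦ ⟨hx.2.1, hx.1⟩, fun hx ↦ ⟨hx.2, hx.1, hx.2.le.trans hbc⟩⟩
  rw [hind, withDensity_indicator measurableSet_Iio,
    Measure.restrict_restrict measurableSet_Iio, hset, Measure.restrict_congr_set Ico_ae_eq_Ioc]

theorem hasDerivAt_inv_one_sub_pow (n : ℕ) {x : ℝ} (hx : 1 - x ≠ 0) :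
    HasDerivAt (fun y ↦ ((1 - y) ^ n)⁻¹) (n / (1 - x) ^ (n + 1)) x := by
  convert! ((hasDerivAt_id x).const_sub 1 |>.pow n).inv (pow_ne_zero n hx) using 1
  rcases n with - | n
  · simp
  · simp only [Nat.cast_add, Nat.cast_one, id_eq, add_tsub_cancel_right, mul_neg, mul_one, neg_neg,
      Pi.pow_apply]
    field_simp
    ring

end Density

section Weighted

variable {μ : Measure ℝ}

/-- The measure `(1 - y) dμ(y)`. In the payoff of playing `x` against `μ`, the tie-breaking term is
its midpoint distribution function at `x`, up to the factor `1 - x`. -/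
noncomputable def weighted (μ : Measure ℝ) : Measure ℝ :=
  μ.withDensity fun y ↦ ENNReal.ofReal (1 - y)

theorem weighted_absolutelyContinuous : weighted μ ≪ μ :=
  withDensity_absolutelyContinuous _ _

theorem absolutelyContinuous_weighted (hμ : ∀ᵐ x ∂μ, x < 1) : μ ≪ weighted μ :=
  withDensity_absolutelyContinuous' (by fun_prop) <| hμ.mono fun x hx ↦ by simpa using hx

theorem withDensity_inv_weighted (hμ : ∀ᵐ x ∂μ, x < 1) :
    (weighted μ).withDensity (fun y ↦ (ENNReal.ofReal (1 - y))⁻¹) = μ :=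
  withDensity_inv_same₀ (by fun_prop) (hμ.mono fun x hx ↦ by simpa using hx)
    (ae_of_all _ fun _ ↦ ENNReal.ofReal_ne_top)

theorem neZero_weighted [NeZero μ] (hμ : ∀ᵐ x ∂μ, x < 1) : NeZero (weighted μ) :=
  ⟨fun h ↦ NeZero.ne μ <|
    Measure.absolutelyContinuous_zero_iff.1 (h ▸ absolutelyContinuous_weighted hμ)⟩

theorem weighted_real_apply (hμ : ∀ᵐ x ∂μ, x ≤ 1) {s : Set ℝ} (hs : MeasurableSet s) :
    (weighted μ).real s = ∫ y in s, (1 - y) ∂μ := by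
  rw [measureReal_def, weighted, withDensity_apply _ hs, integral_eq_lintegral_of_nonneg_ae]
  · exact (ae_restrict_of_ae hμ).mono fun x hx ↦ sub_nonneg.2 hx
  · fun_prop

theorem isFiniteMeasure_weighted [IsFiniteMeasure μ] {a b : ℝ} (hμ : ∀ᵐ x ∂μ, x ∈ Icc a b) :
    IsFiniteMeasure (weighted μ) :=
  isFiniteMeasure_withDensity_ofReal
    ((integrable_const 1).sub (.of_mem_Icc a b aemeasurable_id hμ)).2

end Weighted

section Payoff

variable {P x y : ℝ} {μ ν : Measure ℝ}

theorem u1_eq_indicator :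
    u1 P x y = (1 - x) * (y + P + ((Iio x).indicator (fun z ↦ 1 - z) y +
      (Iic x).indicator (fun z ↦ 1 - z) y) / 2) - P := by
  unfold u1 theta
  rcases lt_trichotomy x y with h | h | h
  · simp only [gt_iff_lt, h.not_gt, ↓reduceIte, h.ne, mem_Iio, mem_Iic, h.not_ge,
      not_false_eq_true, indicator_of_notMem]
    ring
  · subst h
    simp only [gt_iff_lt, lt_self_iff_false, ↓reduceIte, mem_Iio, mem_Iic, le_refl,
      not_false_eq_true, indicator_of_notMem, indicator_of_mem]
    ring
  · simp only [gt_iff_lt, h, ↓reduceIte, mem_Iio, mem_Iic, h.le, indicator_of_mem]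
    ring

theorem integral_u1 [IsProbabilityMeasure μ] (hμ : ∀ᵐ y ∂μ, y ∈ Icc 0 1) :
    ∫ y, u1 P x y ∂μ = (1 - x) * ((∫ y, y ∂μ) + P + midCDF (weighted μ) x) - P := by
  have hid : Integrable (fun y ↦ y) μ := .of_mem_Icc 0 1 aemeasurable_id hμ
  have hsub : Integrable (fun y ↦ 1 - y) μ := (integrable_const 1).sub hid
  have hIio : Integrable ((Iio x).indicator fun y ↦ 1 - y) μ := hsub.indicator measurableSet_Iio
  have hIic : Integrable ((Iic x).indicator fun y ↦ 1 - y) μ := hsub.indicator measurableSet_Iic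
  have hle : ∀ᵐ y ∂μ, y ≤ 1 := hμ.mono fun y hy ↦ hy.2
  have hidP : Integrable (fun y ↦ y + P) μ := hid.add (integrable_const P)
  have hmid : Integrable (fun y ↦ ((Iio x).indicator (fun z ↦ 1 - z) y +
      (Iic x).indicator (fun z ↦ 1 - z) y) / 2) μ := (hIio.add hIic).div_const 2
  have hsum : Integrable (fun y ↦ y + P + ((Iio x).indicator (fun z ↦ 1 - z) y +
      (Iic x).indicator (fun z ↦ 1 - z) y) / 2) μ := hidP.add hmid
  simp only [u1_eq_indicator]
  rw [integral_sub (hsum.const_mul (1 - x)) (integrable_const P), integral_const_mul,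
    integral_add hidP hmid, integral_add hid (integrable_const P), integral_div,
    integral_add hIio hIic, integral_indicator measurableSet_Iio,
    integral_indicator measurableSet_Iic, midCDF, weighted_real_apply hle measurableSet_Iio,
    weighted_real_apply hle measurableSet_Iic]
  simp only [integral_const, probReal_univ, one_smul]

theorem measurable_u1 : Measurable fun p : ℝ × ℝ ↦ u1 P p.1 p.2 := by
  have hθ : Measurable fun p : ℝ × ℝ ↦ theta p.1 p.2 := by
    unfold theta
    exact .ite (measurableSet_lt measurable_snd measurable_fst) measurable_const
      (.ite (measurableSet_eq_fun measurable_fst measurable_snd) measurable_const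
        measurable_const)
  unfold u1
  fun_prop

theorem u1_mem_Icc (hx : x ∈ Icc 0 1) (hy : y ∈ Icc 0 1) :
    u1 P x y ∈ Icc ((1 - x) * (x + P) - P) ((1 - x) * (1 + P) - P) := by
  have hx1 : 0 ≤ 1 - x := sub_nonneg.2 hx.2
  have hy1 : 0 ≤ 1 - y := sub_nonneg.2 hy.2
  have hxy : x ≤ y + theta x y * (1 - y) ∧ y + theta x y * (1 - y) ≤ 1 := by
    unfold theta
    split_ifs <;> constructor <;> linarith [hx.2, hy.2]
  have hu : u1 P x y = (1 - x) * (y + theta x y * (1 - y) + P) - P := by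
    unfold u1
    ring
  rw [hu, mem_Icc]
  constructor <;> gcongr <;> simp only [hxy]

theorem integrable_u1_prod [IsFiniteMeasure μ] [IsFiniteMeasure ν] (hμ : ∀ᵐ x ∂μ, x ∈ Icc 0 1)
    (hν : ∀ᵐ y ∂ν, y ∈ Icc 0 1) : Integrable (fun p : ℝ × ℝ ↦ u1 P p.1 p.2) (μ.prod ν) := by
  refine .of_bound measurable_u1.aestronglyMeasurable (1 + |P|) ?_
  filter_upwards [Measure.quasiMeasurePreserving_fst.ae hμ,
    Measure.quasiMeasurePreserving_snd.ae hν] with p hx hy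
  have hu := u1_mem_Icc (P := P) hx hy
  have hxP : |p.1 * P| ≤ |P| := by
    rw [abs_mul, abs_of_nonneg hx.1]
    exact mul_le_of_le_one_left (abs_nonneg P) hx.2
  rw [Real.norm_eq_abs, abs_le]
  have := abs_le.1 hxP
  constructor <;> nlinarith [hu.1, hu.2, hx.1, hx.2]

theorem integral_integral_u1_swap [IsFiniteMeasure μ] [IsFiniteMeasure ν]
    (hμ : ∀ᵐ x ∂μ, x ∈ Icc 0 1) (hν : ∀ᵐ y ∂ν, y ∈ Icc 0 1) :
    ∫ x, ∫ y, u1 P x y ∂ν ∂μ = ∫ y, ∫ x, u1 P x y ∂μ ∂ν :=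
  integral_integral_swap (integrable_u1_prod hμ hν)

theorem integral_u1_le_iff [IsProbabilityMeasure μ] (hμ : ∀ᵐ y ∂μ, y ∈ Icc 0 1) (hx : x < 1)
    {V : ℝ} : ∫ y, u1 P x y ∂μ ≤ V ↔
      midCDF (weighted μ) x ≤ (V + P) / (1 - x) - ((∫ y, y ∂μ) + P) := by
  rw [integral_u1 hμ, le_sub_iff_add_le, le_div_iff₀ (sub_pos.2 hx), sub_le_iff_le_add,
    mul_comm, add_comm (midCDF _ _)]

end Payoff

section BestResponse

variable {P : ℝ} {μ ν : Measure ℝ}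

/-- `μ` is a best response to `ν` for the player with payoff `u1`, tested against pure
deviations. -/
def IsBestResponse (P : ℝ) (μ ν : Measure ℝ) : Prop :=
  ∀ x ∈ Icc 0 1, ∫ y, u1 P x y ∂ν ≤ ∫ z, ∫ y, u1 P z y ∂ν ∂μ

theorem isBestResponse_of_forall_measure
    (h : ∀ ρ : Measure ℝ, IsProbabilityMeasure ρ → ρ (Icc 0 1)ᶜ = 0 →
      ∫ x, ∫ y, u1 P x y ∂ν ∂ρ ≤ ∫ x, ∫ y, u1 P x y ∂ν ∂μ) : IsBestResponse P μ ν := fun x hx ↦ by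
  have hdirac : Measure.dirac x (Icc 0 1)ᶜ = 0 := by
    rw [Measure.dirac_apply' x measurableSet_Icc.compl, indicator_of_notMem (notMem_compl_iff.2 hx)]
  simpa only [integral_dirac] using h (.dirac x) inferInstance hdirac

namespace IsBestResponse

variable [IsProbabilityMeasure ν]

theorem value_add_pos (h : IsBestResponse P μ ν) (hP : -1 < P) (hν : ∀ᵐ x ∂ν, x ∈ Icc 0 1) :
    0 < (∫ z, ∫ y, u1 P z y ∂ν ∂μ) + P := by
  obtain ⟨x, hx, hx1⟩ := exists_between (max_lt zero_lt_one (neg_lt.1 hP))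
  have hxI : x ∈ Icc 0 1 := ⟨(le_max_left _ _).trans hx.le, hx1.le⟩
  have hxP : 0 < x + P := neg_lt_iff_pos_add.1 ((le_max_right _ _).trans_lt hx)
  have hint : Integrable (fun y ↦ u1 P x y) ν := by
    exact .of_mem_Icc _ _ (measurable_u1.comp measurable_prodMk_left).aemeasurable
      (hν.mono fun y hy ↦ u1_mem_Icc hxI hy)
  have hle : (1 - x) * (x + P) - P ≤ ∫ y, u1 P x y ∂ν := by
    simpa using integral_mono_ae (integrable_const _) hint
      (hν.mono fun y hy ↦ (u1_mem_Icc hxI hy).1)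
  linarith [h x hxI, mul_pos (sub_pos.2 hx1) hxP]

variable [IsProbabilityMeasure μ]

theorem ae_eq_value (h : IsBestResponse P μ ν) (hμ : ∀ᵐ x ∂μ, x ∈ Icc 0 1)
    (hν : ∀ᵐ x ∂ν, x ∈ Icc 0 1) :
    ∀ᵐ x ∂μ, ∫ y, u1 P x y ∂ν = ∫ z, ∫ y, u1 P z y ∂ν ∂μ :=
  (integral_eq_iff_of_ae_le (integrable_u1_prod hμ hν).integral_prod_left (integrable_const _)
    (hμ.mono h)).1 (by simp)

theorem ae_lt_one (h : IsBestResponse P μ ν) (hP : -1 < P) (hμ : ∀ᵐ x ∂μ, x ∈ Icc 0 1)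
    (hν : ∀ᵐ x ∂ν, x ∈ Icc 0 1) : ∀ᵐ x ∂μ, x < 1 := by
  filter_upwards [hμ, h.ae_eq_value hμ hν] with x hx hV
  refine hx.2.lt_of_ne ?_
  rintro rfl
  rw [integral_u1 hν, sub_self, zero_mul] at hV
  linarith [h.value_add_pos hP hν]

theorem complementarySlackness (h : IsBestResponse P μ ν) (hP : -1 < P)
    (hμ : ∀ᵐ x ∂μ, x ∈ Icc 0 1) (hν : ∀ᵐ x ∂ν, x ∈ Icc 0 1) :
    ComplementarySlackness
      (fun x ↦ ((∫ z, ∫ y, u1 P z y ∂ν ∂μ) + P) / (1 - x) - ((∫ y, y ∂ν) + P)) 0 1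
      (weighted μ) (weighted ν) := by
  have hW : 0 < (∫ z, ∫ y, u1 P z y ∂ν ∂μ) + P := h.value_add_pos hP hν
  refine ⟨?_, fun x _ y hy hxy ↦ ?_, ?_, fun x hx ↦ ?_, ?_⟩
  · exact (continuousOn_const.div (by fun_prop) fun x hx ↦ (sub_pos.2 hx.2).ne').sub
      continuousOn_const
  · have := sub_pos.2 hy.2
    gcongr
  · have hsub : Tendsto (fun x : ℝ ↦ 1 - x) (𝓝[<] 1) (𝓝[>] 0) := by
      rw [Tendsto, map_subLeft_nhdsLT, sub_self]
    exact tendsto_atTop_add_const_right _ _ (hsub.inv_tendsto_nhdsGT_zero.const_mul_atTop hW)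
  · exact (integral_u1_le_iff hν hx.2).1 (h x ⟨hx.1, hx.2.le⟩)
  · refine weighted_absolutelyContinuous.ae_le ?_
    filter_upwards [hμ, h.ae_lt_one hP hμ hν, h.ae_eq_value hμ hν] with x hx hx1 hV
    refine ⟨⟨hx.1, hx1⟩, ?_⟩
    rw [← hV, integral_u1 hν, sub_add_cancel, mul_div_cancel_left₀ _ (sub_pos.2 hx1).ne',
      add_sub_cancel_left]

end IsBestResponse

end BestResponse

section Equilibrium

variable {P W T : ℝ} {μ ν : Measure ℝ}

/-- The measure with density `W / (1 - x) ^ 3` on `(0, T]`, the shape of an equilibrium strategy. -/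
noncomputable def cubicDensityMeasure (W T : ℝ) : Measure ℝ :=
  (volume.restrict (Ioc 0 T)).withDensity fun x ↦ ENNReal.ofReal (W / (1 - x) ^ 3)

theorem cubicDensityMeasure_univ (hW : 0 ≤ W) (hT : T ∈ Ico 0 1) :
    cubicDensityMeasure W T univ = ENNReal.ofReal (W / 2 * (1 / (1 - T) ^ 2 - 1)) := by
  have hpos : ∀ x ∈ Icc 0 T, 0 < 1 - x := fun x hx ↦ sub_pos.2 (hx.2.trans_lt hT.2)
  have hderiv : ∀ x ∈ Icc 0 T,
      HasDerivAt (fun y ↦ W / 2 * ((1 - y) ^ 2)⁻¹) (W / (1 - x) ^ 3) x := fun x hx ↦ by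
    refine ((hasDerivAt_inv_one_sub_pow 2 (hpos x hx).ne').const_mul (W / 2)).congr_deriv ?_
    push_cast
    ring
  rw [cubicDensityMeasure, withDensity_apply _ .univ, Measure.restrict_univ,
    setLIntegral_Ioc_ofReal_of_hasDerivAt hT.1 hderiv fun x hx ↦
      div_nonneg hW (pow_nonneg (hpos x hx).le 3)]
  congr 1
  ring

theorem eq_smul_dirac_add_cubicDensityMeasure {c : ℝ} [IsFiniteMeasure (weighted μ)]
    (hW : 0 ≤ W) (hT : T ∈ Ico 0 1) (hμ : ∀ᵐ x ∂μ, x < 1)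
    (hμT : ∀ᵐ x ∂weighted μ, x ∈ Icc 0 T)
    (hμW : ∀ x ∈ Icc 0 T, (weighted μ).real (Iic x) = W / (1 - x) - c) :
    μ = ENNReal.ofReal (W - c) • Measure.dirac 0 + cubicDensityMeasure W T := by
  have hpos : ∀ x ∈ Icc 0 T, 0 < 1 - x := fun x hx ↦ sub_pos.2 (hx.2.trans_lt hT.2)
  have hderiv : ∀ x ∈ Icc 0 T, HasDerivAt (fun y ↦ W / (1 - y) - c) (W / (1 - x) ^ 2) x :=
    fun x hx ↦ by
      simpa [div_eq_mul_inv] using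
        ((hasDerivAt_inv_one_sub_pow 1 (hpos x hx).ne').const_mul W).sub_const c
  have hweighted := eq_smul_dirac_add_withDensity_of_real_Iic_eq hT.1 hderiv
    (fun x _ ↦ div_nonneg hW (sq_nonneg _)) hμT hμW
  have hcubic : (fun x ↦ ENNReal.ofReal (W / (1 - x) ^ 2) * (ENNReal.ofReal (1 - x))⁻¹)
      =ᵐ[volume.restrict (Ioc 0 T)] fun x ↦ ENNReal.ofReal (W / (1 - x) ^ 3) := by
    filter_upwards [ae_restrict_mem measurableSet_Ioc] with x hx
    have hx' : 0 < 1 - x := hpos x (Ioc_subset_Icc_self hx)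
    rw [← ENNReal.ofReal_inv_of_pos hx', ← ENNReal.ofReal_mul (by positivity)]
    congr 1
    field_simp
  rw [← withDensity_inv_weighted hμ, hweighted, withDensity_add_measure, withDensity_smul_measure,
    dirac_withDensity, ← withDensity_mul _ (by fun_prop) (by fun_prop), cubicDensityMeasure]
  congr 1
  · simp
  · exact withDensity_congr_ae hcubic

theorem eq_mul_one_sub_of_weighted_real_Iic_eq [IsProbabilityMeasure μ]
    (hμ : ∀ᵐ x ∂μ, x ∈ Icc 0 1) (hT : T < 1) (hμT : ∀ᵐ x ∂weighted μ, x ∈ Icc 0 T)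
    (hμW : (weighted μ).real (Iic T) = W / (1 - T) - ((∫ x, x ∂μ) + P)) :
    W = (1 + P) * (1 - T) := by
  have hfull : Iic T =ᵐ[weighted μ] univ := eventuallyEq_univ.2 (hμT.mono fun x hx ↦ hx.2)
  have hid : Integrable (fun x ↦ x) μ := .of_mem_Icc 0 1 aemeasurable_id hμ
  have hmass : (weighted μ).real (Iic T) = 1 - ∫ x, x ∂μ := by
    rw [measureReal_congr hfull, weighted_real_apply (hμ.mono fun x hx ↦ hx.2) .univ,
      Measure.restrict_univ, integral_sub (integrable_const _) hid,
      integral_const, probReal_univ, one_smul]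
  rw [← div_eq_iff (sub_pos.2 hT).ne']
  linarith

theorem IsBestResponse.exists_eq_cubicDensityMeasure [IsProbabilityMeasure μ]
    [IsProbabilityMeasure ν] (h₁ : IsBestResponse P μ ν) (h₂ : IsBestResponse P ν μ) (hP : -1 < P)
    (hμ : ∀ᵐ x ∂μ, x ∈ Icc 0 1) (hν : ∀ᵐ x ∂ν, x ∈ Icc 0 1) :
    ∃ T ∈ Ioo 0 1, μ = cubicDensityMeasure ((1 + P) * (1 - T)) T ∧
      ν = cubicDensityMeasure ((1 + P) * (1 - T)) T := by
  have hμ1 : ∀ᵐ x ∂μ, x < 1 := h₁.ae_lt_one hP hμ hν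
  have hν1 : ∀ᵐ x ∂ν, x < 1 := h₂.ae_lt_one hP hν hμ
  have := isFiniteMeasure_weighted hμ
  have := isFiniteMeasure_weighted hν
  have := neZero_weighted hμ1
  have := neZero_weighted hν1
  have hs₁ := h₁.complementarySlackness hP hμ hν
  have hs₂ := h₂.complementarySlackness hP hν hμ
  obtain ⟨T, hT, hμT, hνT, hνW, hμW⟩ := hs₁.exists_forall_real_Iic_eq hs₂
  have hTmem : T ∈ Icc 0 T := right_mem_Icc.2 hT.1.le
  have hTI : T ∈ Ico 0 1 := Ioo_subset_Ico_self hT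
  have hW : 0 ≤ (1 + P) * (1 - T) := mul_nonneg (by linarith) (sub_nonneg.2 hT.2.le)
  rw [eq_mul_one_sub_of_weighted_real_Iic_eq hν hT.2 hνT (hνW T hTmem)] at hνW
  rw [eq_mul_one_sub_of_weighted_real_Iic_eq hμ hT.2 hμT (hμW T hTmem)] at hμW
  exact ⟨T, hT, eq_and_eq_of_eq_smul_dirac_add
    (eq_smul_dirac_add_cubicDensityMeasure hW hTI hμ1 hμT hμW)
    (eq_smul_dirac_add_cubicDensityMeasure hW hTI hν1 hνT hνW)
    ((hs₁.measure_singleton_eq_zero_or 0).imp (absolutelyContinuous_weighted hμ1 ·)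
      (absolutelyContinuous_weighted hν1 ·))⟩

theorem mul_eq_sub_one_and_eq_sqrt {k t : ℝ} (hP : -1 < P) (hk : k = √((P + 1) ^ 2 + 1))
    (ht : 0 < t) (h : (1 + P) * t / 2 * (1 / t ^ 2 - 1) = 1) :
    (1 + P) * t = k - 1 ∧ t = √((k - 1) / (k + 1)) := by
  have hP1 : 0 < 1 + P := by linarith
  have hk2 : k ^ 2 = (P + 1) ^ 2 + 1 := by rw [hk, Real.sq_sqrt (by positivity)]
  have hk0 : 0 ≤ k := hk ▸ Real.sqrt_nonneg _
  have hquad : (1 + P) * (1 - t ^ 2) = 2 * t := by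
    field_simp at h
    linarith
  have hsq : ((1 + P) * t + 1) ^ 2 = k ^ 2 := by
    linear_combination (-(1 + P)) * hquad - hk2
  have hmul : (1 + P) * t + 1 = k := (pow_left_inj₀ (by positivity) hk0 two_ne_zero).1 hsq
  refine ⟨eq_sub_of_add_eq hmul, (Real.sqrt_eq_iff_mul_self_eq_of_pos ht).2 ?_ |>.symm⟩
  rw [eq_div_iff (by linarith), ← hmul]
  linear_combination -t * hquad

end Equilibrium

theorem stmt6_general (P : ℝ) (hP : -1 < P) (k h : ℝ)
    (hk : k = √((P + 1) ^ 2 + 1)) (hh : h = 1 - √((k - 1) / (k + 1)))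
    (f : ℝ → ℝ) (hf : ∀ x, f x = if x < h then (k - 1) / (1 - x) ^ 3 else 0)
    (μ1 μ2 : Measure ℝ) [IsProbabilityMeasure μ1] [IsProbabilityMeasure μ2]
    (hs1 : μ1 (Icc 0 1)ᶜ = 0) (hs2 : μ2 (Icc 0 1)ᶜ = 0)
    (hne1 : ∀ ν : Measure ℝ, IsProbabilityMeasure ν → ν (Icc 0 1)ᶜ = 0 →
      ∫ x, ∫ y, u1 P x y ∂μ2 ∂ν ≤ ∫ x, ∫ y, u1 P x y ∂μ2 ∂μ1)
    (hne2 : ∀ ν : Measure ℝ, IsProbabilityMeasure ν → ν (Icc 0 1)ᶜ = 0 →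
      ∫ x, ∫ y, u2 P x y ∂ν ∂μ1 ≤ ∫ x, ∫ y, u2 P x y ∂μ2 ∂μ1) :
    μ1 = μ2 ∧ μ1 = (volume.restrict (Icc 0 1)).withDensity fun x ↦ ENNReal.ofReal (f x) := by
  have hμ1 : ∀ᵐ x ∂μ1, x ∈ Icc 0 1 := hs1
  have hμ2 : ∀ᵐ x ∂μ2, x ∈ Icc 0 1 := hs2
  have hbest1 : IsBestResponse P μ1 μ2 := isBestResponse_of_forall_measure hne1
  have hbest2 : IsBestResponse P μ2 μ1 := isBestResponse_of_forall_measure fun ν hν hνs ↦ by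
    rw [integral_integral_u1_swap hνs hμ1, integral_integral_u1_swap hμ2 hμ1]
    exact hne2 ν hν hνs
  obtain ⟨T, hT, hμ1T, hμ2T⟩ := hbest1.exists_eq_cubicDensityMeasure hbest2 hP hμ1 hμ2
  refine ⟨hμ1T.trans hμ2T.symm, ?_⟩
  have hmass : (1 + P) * (1 - T) / 2 * (1 / (1 - T) ^ 2 - 1) = 1 := by
    rw [← ENNReal.ofReal_eq_one, ← cubicDensityMeasure_univ (mul_nonneg (by linarith)
      (sub_nonneg.2 hT.2.le)) (Ioo_subset_Ico_self hT), ← hμ1T, measure_univ]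
  obtain ⟨hW, hTk⟩ := mul_eq_sub_one_and_eq_sqrt hP hk (sub_pos.2 hT.2) hmass
  have hTh : T = h := by rw [hh, ← hTk, sub_sub_cancel]
  simp only [hf]
  rw [hμ1T, hW, cubicDensityMeasure, ← hTh, withDensity_restrict_Icc_ite_lt hT.2.le]

theorem stmt6 (P : ℝ) (hP : 0 < P) (k h : ℝ)
    (hk : k = Real.sqrt ((P + 1) ^ 2 + 1))
    (hh : h = 1 - Real.sqrt ((k - 1) / (k + 1)))
    (f : ℝ → ℝ)
    (hf : ∀ x, f x = if x < h then (k - 1) / (1 - x) ^ 3 else 0)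
    (μ1 μ2 : Measure ℝ) [IsProbabilityMeasure μ1] [IsProbabilityMeasure μ2]
    -- strategies are supported on the action set [0,1]
    (hs1 : μ1 (Set.Icc (0 : ℝ) 1)ᶜ = 0) (hs2 : μ2 (Set.Icc (0 : ℝ) 1)ᶜ = 0)
    -- (μ1, μ2) is a mixed Nash equilibrium: no unilateral deviation helps
    (hne1 : ∀ ν : Measure ℝ, IsProbabilityMeasure ν → ν (Set.Icc (0 : ℝ) 1)ᶜ = 0 →
      (∫ x, (∫ y, u1 P x y ∂μ2) ∂ν) ≤ ∫ x, (∫ y, u1 P x y ∂μ2) ∂μ1)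
    (hne2 : ∀ ν : Measure ℝ, IsProbabilityMeasure ν → ν (Set.Icc (0 : ℝ) 1)ᶜ = 0 →
      (∫ x, (∫ y, u2 P x y ∂ν) ∂μ1) ≤ ∫ x, (∫ y, u2 P x y ∂μ2) ∂μ1) :
    μ1 = μ2 ∧
    μ1 = (volume.restrict (Set.Icc (0 : ℝ) 1)).withDensity
        (fun x => ENNReal.ofReal (f x)) :=
  stmt6_general P (neg_one_lt_zero.trans hP) k h hk hh f hf μ1 μ2 hs1 hs2 hne1 hne2
end

section
/- Let P > 0, set r_max = 1/2 − P²/(2(P+1)²), and define p(x) = P/(1−2x)^{3/2} for 0 ≤ x < r_max and p(x) = 0 for r_max ≤ x ≤ 1. Then: (i) ∫_0^1 p(x) dx = 1; (ii) ∫_0^1 x·p(x) dx = 1/(2P+2); and (iii) for every a ∈ [0, r_max], a·P = ∫_0^a p(b)·(1 − a − b) db, i.e., the equilibrium indifference condition of the CfR game with perfectly negatively correlated risks (ρ = −1) holds on the support of p. -/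
open MeasureTheory

/-! On `[0, 1/2)` the density `P / (1 - 2 * x) ^ (3/2)` and its first-moment integrand
`x * P / (1 - 2 * x) ^ (3/2)` have the primitives `P / √(1 - 2 * x)` and
`P * (1 - x) / √(1 - 2 * x)`. In
`∫₀ᵃ p(b) * (1 - a - b) db = (1 - a) * ∫₀ᵃ p(b) db - ∫₀ᵃ b * p(b) db`
the square roots therefore cancel and `a * P` remains, whatever `a < 1/2`. The cutoff `r_max`
satisfies `√(1 - 2 * r_max) = P / (P + 1)`, which is exactly what makes the total mass
`P * ((P + 1) / P - 1)` equal to `1`. -/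

theorem intervalIntegral_ite_lt {E : Type*} [NormedAddCommGroup E] [NormedSpace ℝ E]
    {μ : Measure ℝ} [NullSingletonClass μ] {a b r : ℝ} (hr : r ∈ Set.Icc a b) (f : ℝ → E) :
    ∫ x in a..b, (if x < r then f x else 0) ∂μ = ∫ x in a..r, f x ∂μ := by
  rw [← intervalIntegral.integral_indicator hr]
  refine intervalIntegral.integral_congr_ae ?_
  filter_upwards [Measure.ae_ne μ r] with x hx _
  simp only [Set.indicator_apply, Set.mem_ofPred_eq, lt_iff_le_and_ne, hx, ne_eq,
    not_false_eq_true, and_true]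

/-- The density `p x = P / (1 - 2 * x) ^ (3/2)` of the risk level `x` that makes the opponent
indifferent in the game with penalty `P`, before it is cut off at `maxRisk P`. It solves
`(1 - 2 * x) * dp/dx = 3 * p`, `p 0 = P`, which is the indifference condition differentiated
twice. -/
noncomputable def indifferenceDensity (P x : ℝ) : ℝ :=
  P / (1 - 2 * x) ^ ((3 : ℝ) / 2)

/-- The supremum `r_max` of the risk levels played in the equilibrium with penalty `P`. -/
noncomputable def maxRisk (P : ℝ) : ℝ :=
  1 / 2 - P ^ 2 / (2 * (P + 1) ^ 2)

/-- The density of the equilibrium mixed strategy for penalty `P`, extended by zero beyond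
`maxRisk P`; only its values on the set `[0, 1]` of risk levels are meaningful. -/
noncomputable def equilibriumDensity (P x : ℝ) : ℝ :=
  if x < maxRisk P then indifferenceDensity P x else 0

section Primitives

variable (P : ℝ) {a x : ℝ}

theorem indifferenceDensity_eq_div_sqrt_pow (hx : x ≤ 1 / 2) :
    indifferenceDensity P x = P / √(1 - 2 * x) ^ 3 := by
  rw [indifferenceDensity, Real.rpow_div_two_eq_sqrt _ (by linarith)]
  norm_cast

theorem hasDerivAt_div_sqrt_one_sub_two_mul (hx : x < 1 / 2) :
    HasDerivAt (fun y ↦ P / √(1 - 2 * y)) (indifferenceDensity P x) x := by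
  have hpos : 0 < 1 - 2 * x := by linarith
  have hs : √(1 - 2 * x) ≠ 0 := (Real.sqrt_pos.mpr hpos).ne'
  have hlin : HasDerivAt (fun y : ℝ ↦ 1 - 2 * y) (-2) x := by
    simpa using ((hasDerivAt_id x).const_mul 2).const_sub 1
  refine ((hasDerivAt_const x P).fun_div (hlin.sqrt hpos.ne') hs).congr_deriv ?_
  rw [indifferenceDensity_eq_div_sqrt_pow P hx.le]
  field_simp
  ring

theorem hasDerivAt_one_sub_mul_div_sqrt_one_sub_two_mul (hx : x < 1 / 2) :
    HasDerivAt (fun y ↦ (1 - y) * (P / √(1 - 2 * y))) (x * indifferenceDensity P x) x := by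
  have hpos : 0 < 1 - 2 * x := by linarith
  have hs : √(1 - 2 * x) ≠ 0 := (Real.sqrt_pos.mpr hpos).ne'
  have hfactor : P / √(1 - 2 * x) = (1 - 2 * x) * indifferenceDensity P x := by
    rw [indifferenceDensity_eq_div_sqrt_pow P hx.le]
    nth_rw 2 [← Real.sq_sqrt hpos.le]
    field_simp
  refine (((hasDerivAt_id' x).const_sub 1).fun_mul
    (hasDerivAt_div_sqrt_one_sub_two_mul P hx)).congr_deriv ?_
  rw [hfactor]
  ring

theorem continuousOn_indifferenceDensity :
    ContinuousOn (indifferenceDensity P) (Set.Iio (1 / 2)) := by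
  have hpos (x : ℝ) (hx : x ∈ Set.Iio (1 / 2 : ℝ)) : 0 < 1 - 2 * x := by
    linarith [Set.mem_Iio.mp hx]
  refine continuousOn_const.div ?_ fun x hx ↦ (Real.rpow_pos_of_pos (hpos x hx) _).ne'
  exact ContinuousOn.rpow_const (by fun_prop) fun x hx ↦ Or.inl (hpos x hx).ne'

theorem uIcc_zero_subset_Iio_half (ha : a < 1 / 2) : Set.uIcc 0 a ⊆ Set.Iio (1 / 2) :=
  Set.ordConnected_Iio.uIcc_subset (by norm_num) ha

theorem intervalIntegrable_indifferenceDensity (ha : a < 1 / 2) :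
    IntervalIntegrable (indifferenceDensity P) volume 0 a :=
  ((continuousOn_indifferenceDensity P).mono
    (uIcc_zero_subset_Iio_half ha)).intervalIntegrable

theorem intervalIntegrable_mul_indifferenceDensity (ha : a < 1 / 2) :
    IntervalIntegrable (fun x ↦ x * indifferenceDensity P x) volume 0 a :=
  (intervalIntegrable_indifferenceDensity P ha).continuousOn_mul continuousOn_id

theorem integral_indifferenceDensity (ha : a < 1 / 2) :
    ∫ x in (0 : ℝ)..a, indifferenceDensity P x = P / √(1 - 2 * a) - P := by
  rw [intervalIntegral.integral_eq_sub_of_hasDerivAt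
    (fun x hx ↦ hasDerivAt_div_sqrt_one_sub_two_mul P (uIcc_zero_subset_Iio_half ha hx))
    (intervalIntegrable_indifferenceDensity P ha)]
  simp only [mul_zero, sub_zero, Real.sqrt_one, div_one]

theorem integral_mul_indifferenceDensity (ha : a < 1 / 2) :
    ∫ x in (0 : ℝ)..a, x * indifferenceDensity P x = (1 - a) * (P / √(1 - 2 * a)) - P := by
  rw [intervalIntegral.integral_eq_sub_of_hasDerivAt
    (fun x hx ↦ hasDerivAt_one_sub_mul_div_sqrt_one_sub_two_mul P
      (uIcc_zero_subset_Iio_half ha hx))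
    (intervalIntegrable_mul_indifferenceDensity P ha)]
  simp only [mul_zero, sub_zero, Real.sqrt_one, div_one, one_mul]

theorem integral_indifferenceDensity_mul_one_sub_sub (ha : a < 1 / 2) :
    ∫ b in (0 : ℝ)..a, indifferenceDensity P b * (1 - a - b) = a * P := by
  calc ∫ b in (0 : ℝ)..a, indifferenceDensity P b * (1 - a - b)
      = ∫ b in (0 : ℝ)..a,
          ((1 - a) * indifferenceDensity P b - b * indifferenceDensity P b) := by
        congr with b
        ring
    _ = (1 - a) * (P / √(1 - 2 * a) - P) - ((1 - a) * (P / √(1 - 2 * a)) - P) := by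
        rw [intervalIntegral.integral_sub
          ((intervalIntegrable_indifferenceDensity P ha).const_mul _)
          (intervalIntegrable_mul_indifferenceDensity P ha),
          intervalIntegral.integral_const_mul, integral_indifferenceDensity P ha,
          integral_mul_indifferenceDensity P ha]
    _ = a * P := by ring

end Primitives

section Equilibrium

variable {P : ℝ}

theorem maxRisk_lt_half (hP : 0 < P) : maxRisk P < 1 / 2 :=
  sub_lt_self _ (by positivity)

theorem maxRisk_nonneg (hP : 0 ≤ P) : 0 ≤ maxRisk P := by
  have hratio : P ^ 2 / (2 * (P + 1) ^ 2) ≤ 1 / 2 := by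
    rw [div_le_div_iff₀ (by positivity) two_pos]
    nlinarith
  exact sub_nonneg.mpr hratio

theorem sqrt_one_sub_two_mul_maxRisk (hP : 0 ≤ P) :
    √(1 - 2 * maxRisk P) = P / (P + 1) := by
  have hsq : 1 - 2 * maxRisk P = (P / (P + 1)) ^ 2 := by
    rw [maxRisk]
    field_simp
    ring
  rw [hsq, Real.sqrt_sq (by positivity)]

theorem maxRisk_mem_Icc (hP : 0 < P) : maxRisk P ∈ Set.Icc 0 1 :=
  ⟨maxRisk_nonneg hP.le, by linarith [maxRisk_lt_half hP]⟩

theorem integral_equilibriumDensity (hP : 0 < P) :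
    ∫ x in (0 : ℝ)..1, equilibriumDensity P x = 1 := by
  simp only [equilibriumDensity]
  rw [intervalIntegral_ite_lt (maxRisk_mem_Icc hP),
    integral_indifferenceDensity P (maxRisk_lt_half hP), sqrt_one_sub_two_mul_maxRisk hP.le]
  field_simp
  ring

theorem integral_mul_equilibriumDensity (hP : 0 < P) :
    ∫ x in (0 : ℝ)..1, x * equilibriumDensity P x = 1 / (2 * P + 2) := by
  simp only [equilibriumDensity, mul_ite, mul_zero]
  rw [intervalIntegral_ite_lt (maxRisk_mem_Icc hP),
    integral_mul_indifferenceDensity P (maxRisk_lt_half hP),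
    sqrt_one_sub_two_mul_maxRisk hP.le, maxRisk]
  field_simp
  ring

theorem integral_equilibriumDensity_mul_one_sub_sub (hP : 0 < P) {a : ℝ}
    (ha : a ∈ Set.Icc 0 (maxRisk P)) :
    ∫ b in (0 : ℝ)..a, equilibriumDensity P b * (1 - a - b) = a * P := by
  rw [← integral_indifferenceDensity_mul_one_sub_sub P (ha.2.trans_lt (maxRisk_lt_half hP))]
  refine intervalIntegral.integral_congr_uIoo fun b hb ↦ ?_
  rw [Set.uIoo_of_le ha.1] at hb
  simp only [equilibriumDensity, if_pos (hb.2.trans_le ha.2)]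

end Equilibrium

theorem stmt16 (P : ℝ) (hP : 0 < P) (rmax : ℝ)
    (hrmax : rmax = 1 / 2 - P ^ 2 / (2 * (P + 1) ^ 2))
    (p : ℝ → ℝ)
    (hp : ∀ x ∈ Set.Icc (0 : ℝ) 1,
      p x = if x < rmax then P / (1 - 2 * x) ^ ((3 : ℝ) / 2) else 0) :
    (∫ x in (0 : ℝ)..1, p x) = 1 ∧
    (∫ x in (0 : ℝ)..1, x * p x) = 1 / (2 * P + 2) ∧
    ∀ a ∈ Set.Icc (0 : ℝ) rmax,
      a * P = ∫ b in (0 : ℝ)..a, p b * (1 - a - b) := by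
  obtain rfl : rmax = maxRisk P := hrmax
  have hp_eq {a : ℝ} (ha : a ∈ Set.Icc (0 : ℝ) 1) :
      Set.EqOn p (equilibriumDensity P) (Set.uIcc 0 a) := fun x hx ↦
    hp x (Set.uIcc_subset_Icc (Set.left_mem_Icc.mpr zero_le_one) ha hx)
  have hp_one := hp_eq (Set.right_mem_Icc.mpr zero_le_one)
  refine ⟨?_, ?_, fun a ha ↦ ?_⟩
  · rw [intervalIntegral.integral_congr hp_one, integral_equilibriumDensity hP]
  · rw [← integral_mul_equilibriumDensity hP]
    exact intervalIntegral.integral_congr fun x hx ↦ congrArg (x * ·) (hp_one hx)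
  · rw [← integral_equilibriumDensity_mul_one_sub_sub hP ha]
    have ha_one := Set.Icc_subset_Icc_right (maxRisk_mem_Icc hP).2 ha
    exact intervalIntegral.integral_congr fun b hb ↦
      congrArg (· * (1 - a - b)) (hp_eq ha_one hb).symm
end
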